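/- Exhaustive application of the unit and conflict rules is symmetry-preserving: if F* is obtained from a CNF formula F by exhaustively applying the unit rule and the conflict rule, then Aut_syn(F)_{{Lit(F*)}} = Aut_syn(F) and Aut_syn(F)↓_{Lit(F*)} ⊆ Aut_syn(F*). -/

import Mathlib

/-- A literal over a variable type `V`: a variable or its negation. -/
inductive Lit (V : Type) where
  | pos : V → Lit V
  | neg : V → Lit V
deriving DecidableEq

variable {V : Type} [DecidableEq V]

/-- Negation of a literal (so that double negation is the identity). -/
def Lit.negate : Lit V → Lit V
  | .pos v => .neg v
  | .neg v => .pos v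

/-- The underlying variable of a literal. -/
def Lit.var : Lit V → V
  | .pos v => v
  | .neg v => v

/-- A clause is a finite set of literals. -/
abbrev Clause (V : Type) := Finset (Lit V)

/-- A CNF formula is a finite set of clauses. -/
abbrev CNF (V : Type) := Finset (Clause V)

/-- `Var(F)`: the variables occurring in a formula. -/
def CNF.vars (F : CNF V) : Finset V := Finset.sup F (fun C => Finset.image Lit.var C)

/-- `Lit(F) = Var(F) ∪ {v̄ : v ∈ Var(F)}`. -/
def CNF.lits (F : CNF V) : Finset (Lit V) :=
  Finset.image Lit.pos (CNF.vars F) ∪ Finset.image Lit.neg (CNF.vars F)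

/-- The value of a literal under a complete assignment (given on the variables,
which determines a consistent complete assignment on all literals). -/
def Lit.val (σ : V → Bool) : Lit V → Bool
  | .pos v => σ v
  | .neg v => !(σ v)

/-- `C[σ]`: delete from `C` every literal mapped to `⊥` by `σ`
(i.e. keep `l` with `¬l ∉ σ`). -/
def Clause.reduce (σ : V → Bool) (C : Clause V) : Clause V :=
  Finset.filter (fun l => Lit.val σ (Lit.negate l) = false) C

/-- `F[σ]`: delete every clause containing a literal mapped to `⊤` by `σ`
(for a complete assignment: every clause containing no false literal is kept)
and delete from each remaining clause every literal mapped to `⊥`. -/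
def CNF.reduce (F : CNF V) (σ : V → Bool) : CNF V :=
  Finset.image (Clause.reduce σ) (Finset.filter (fun C => ∀ l ∈ C, Lit.val σ l = false) F)

/-- Apply a map on literals elementwise to clauses and formulas. -/
def CNF.map (φ : Lit V → Lit V) (F : CNF V) : CNF V :=
  Finset.image (fun C => Finset.image φ C) F

/-- `φ` is a syntactic symmetry of `F`: a bijection of `Lit(F)` respecting
negation with `φ(F) = F`. -/
def IsSynSym (F : CNF V) (φ : Lit V → Lit V) : Prop :=
  Set.BijOn φ (CNF.lits F : Set (Lit V)) (CNF.lits F : Set (Lit V)) ∧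
  (∀ l ∈ CNF.lits F, φ (Lit.negate l) = Lit.negate (φ l)) ∧
  CNF.map φ F = F

/-- `φ` is a semantic symmetry of `F`: a bijection of `Lit(F)` respecting
negation with `F[σ] = φ(F)[σ]` for every complete assignment `σ`. -/
def IsSemSym (F : CNF V) (φ : Lit V → Lit V) : Prop :=
  Set.BijOn φ (CNF.lits F : Set (Lit V)) (CNF.lits F : Set (Lit V)) ∧
  (∀ l ∈ CNF.lits F, φ (Lit.negate l) = Lit.negate (φ l)) ∧
  ∀ σ : V → Bool, CNF.reduce F σ = CNF.reduce (CNF.map φ F) σ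

/-- Extend a map defined on the literal set `S` by the identity outside `S`. -/
def extendId (S : Finset (Lit V)) (φ : Lit V → Lit V) : Lit V → Lit V :=
  fun l => if l ∈ S then φ l else l

/-- `F[l ↦ ⊤]`: delete every clause containing `l` and delete `l̄` from every
remaining clause. -/
def CNF.assignTrue (F : CNF V) (l : Lit V) : CNF V :=
  Finset.image (fun C => Finset.erase C (Lit.negate l)) (Finset.filter (fun C => l ∉ C) F)

/-- One (proper) application of the unit rule (`{l} ∈ F` is replaced by
`F[l ↦ ⊤]`) or the conflict rule (`∅ ∈ F` reduces `F` to `{∅}`). -/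
def UCStep (F F' : CNF V) : Prop :=
  F' ≠ F ∧
    ((∃ l : Lit V, ({l} : Clause V) ∈ F ∧ F' = CNF.assignTrue F l) ∨
      ((∅ : Clause V) ∈ F ∧ F' = {(∅ : Clause V)}))

theorem Lit.negate_negate (l : Lit V) : l.negate.negate = l := by cases l <;> rfl

theorem Lit.negate_ne (l : Lit V) : l.negate ≠ l := by cases l <;> simp [Lit.negate]

theorem Lit.var_negate (l : Lit V) : l.negate.var = l.var := by cases l <;> rfl

theorem mem_vars (F : CNF V) (v : V) : v ∈ CNF.vars F ↔ ∃ C ∈ F, ∃ l ∈ C, l.var = v := by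
  simp [CNF.vars, Finset.mem_sup]

theorem mem_lits (F : CNF V) (l : Lit V) :
    l ∈ CNF.lits F ↔ ∃ C ∈ F, l ∈ C ∨ l.negate ∈ C := by
  have h : l ∈ CNF.lits F ↔ l.var ∈ CNF.vars F := by
    cases l <;> simp [CNF.lits, Lit.var]
  rw [h, mem_vars]
  constructor
  · rintro ⟨C, hC, m, hm, e⟩
    refine ⟨C, hC, ?_⟩
    cases l <;> cases m <;> simp [Lit.var, Lit.negate] at * <;> subst e <;> simp [hm]
  · rintro ⟨C, hC, h | h⟩
    · exact ⟨C, hC, l, h, rfl⟩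
    · exact ⟨C, hC, _, h, Lit.var_negate l⟩

theorem negate_mem_lits {F : CNF V} {l : Lit V} : l.negate ∈ CNF.lits F ↔ l ∈ CNF.lits F := by
  simp [mem_lits, Lit.negate_negate, or_comm]

theorem mem_assignTrue {F : CNF V} {l : Lit V} {D : Clause V} :
    D ∈ CNF.assignTrue F l ↔ ∃ C ∈ F, l ∉ C ∧ C.erase l.negate = D := by
  simp [CNF.assignTrue, and_assoc]

theorem step_lits {F G : CNF V} (h : UCStep F G) : CNF.lits G ⊆ CNF.lits F := by
  intro x hx
  rw [mem_lits] at hx ⊢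
  obtain ⟨D, hD, hx⟩ := hx
  rcases h.2 with ⟨l, hl, rfl⟩ | ⟨_, rfl⟩
  · obtain ⟨C, hC, -, rfl⟩ := mem_assignTrue.1 hD
    exact ⟨C, hC, hx.imp Finset.mem_of_mem_erase Finset.mem_of_mem_erase⟩
  · simp at hD
    subst hD
    simp at hx

theorem ucRefl_of {F G : CNF V}
    (h : (∃ l : Lit V, ({l} : Clause V) ∈ F ∧ G = CNF.assignTrue F l) ∨
      ((∅ : Clause V) ∈ F ∧ G = {(∅ : Clause V)})) : Relation.ReflGen UCStep F G := by
  by_cases e : G = F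
  · rw [e]
  · exact .single ⟨e, h⟩

theorem empty_assign {F : CNF V} (l : Lit V) (h : (∅ : Clause V) ∈ F) :
    (∅ : Clause V) ∈ CNF.assignTrue F l :=
  mem_assignTrue.2 ⟨∅, h, by simp, by simp⟩

theorem assign_comm (F : CNF V) {l m : Lit V} (h : m ≠ l.negate) :
    CNF.assignTrue (CNF.assignTrue F l) m = CNF.assignTrue (CNF.assignTrue F m) l := by
  have h' : l ≠ m.negate := fun e => h (by rw [e, Lit.negate_negate])
  ext D
  simp only [mem_assignTrue]
  constructor
  · rintro ⟨_, ⟨C, hC, h1, rfl⟩, h2, rfl⟩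
    refine ⟨_, ⟨C, hC, ?_, rfl⟩, ?_, Finset.erase_right_comm⟩
    · intro h3; exact h2 (Finset.mem_erase.2 ⟨h, h3⟩)
    · intro h3; exact h1 (Finset.mem_of_mem_erase h3)
  · rintro ⟨_, ⟨C, hC, h1, rfl⟩, h2, rfl⟩
    refine ⟨_, ⟨C, hC, ?_, rfl⟩, ?_, Finset.erase_right_comm⟩
    · intro h3; exact h2 (Finset.mem_erase.2 ⟨h', h3⟩)
    · intro h3; exact h1 (Finset.mem_of_mem_erase h3)

theorem unit_assign {F : CNF V} {l m : Lit V} (hm : ({m} : Clause V) ∈ F) (h1 : m ≠ l)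
    (h : m ≠ l.negate) : ({m} : Clause V) ∈ CNF.assignTrue F l :=
  mem_assignTrue.2 ⟨{m}, hm, by simpa using h1.symm,
    Finset.erase_eq_of_notMem (by simpa using h.symm)⟩

theorem empty_of_both {F : CNF V} {l : Lit V} (hm : ({l.negate} : Clause V) ∈ F) :
    (∅ : Clause V) ∈ CNF.assignTrue F l :=
  mem_assignTrue.2 ⟨_, hm, by simpa using (Lit.negate_ne l).symm, by simp⟩

theorem diamond (F G H : CNF V) (h1 : UCStep F G) (h2 : UCStep F H) :
    ∃ D, Relation.ReflGen UCStep G D ∧ Relation.ReflTransGen UCStep H D := by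
  suffices ∃ D, Relation.ReflGen UCStep G D ∧ Relation.ReflGen UCStep H D by
    obtain ⟨D, a, b⟩ := this
    exact ⟨D, a, b.to_reflTransGen⟩
  rcases h1.2 with ⟨l, hl, rfl⟩ | ⟨he, rfl⟩ <;> rcases h2.2 with ⟨m, hm, rfl⟩ | ⟨he', rfl⟩
  · by_cases e : m = l
    · subst e; exact ⟨_, .refl, .refl⟩
    by_cases e' : m = l.negate
    · subst e'
      exact ⟨{∅}, ucRefl_of (.inr ⟨empty_of_both hm, rfl⟩),
        ucRefl_of (.inr ⟨empty_of_both (by rwa [Lit.negate_negate]), rfl⟩)⟩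
    · have h' : l ≠ m.negate := fun e => e' (by rw [e, Lit.negate_negate])
      exact ⟨_, ucRefl_of (.inl ⟨m, unit_assign hm e e', rfl⟩),
        ucRefl_of (.inl ⟨l, unit_assign hl (Ne.symm e) h', assign_comm F e'⟩)⟩
  · exact ⟨{∅}, ucRefl_of (.inr ⟨empty_assign l he', rfl⟩), .refl⟩
  · exact ⟨{∅}, .refl, ucRefl_of (.inr ⟨empty_assign m he, rfl⟩)⟩
  · exact ⟨_, .refl, .refl⟩

theorem mem_map {φ : Lit V → Lit V} {F : CNF V} {D : Clause V} :
    D ∈ CNF.map φ F ↔ ∃ C ∈ F, C.image φ = D := by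
  simp [CNF.map]

theorem map_map (f g : Lit V → Lit V) (F : CNF V) :
    CNF.map f (CNF.map g F) = CNF.map (f ∘ g) F := by
  simp [CNF.map, Finset.image_image, Function.comp_def]

theorem map_id (F : CNF V) : CNF.map id F = F := by
  simp [CNF.map]

theorem map_assign (ψ : Equiv.Perm (Lit V)) (hn : ∀ l, ψ l.negate = (ψ l).negate)
    (F : CNF V) (l : Lit V) :
    CNF.map ψ (CNF.assignTrue F l) = CNF.assignTrue (CNF.map ψ F) (ψ l) := by
  ext D
  simp only [mem_map, mem_assignTrue]
  constructor
  · rintro ⟨_, ⟨C, hC, h, rfl⟩, rfl⟩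
    refine ⟨_, ⟨C, hC, rfl⟩, by simpa using h, ?_⟩
    rw [← hn, Finset.image_erase ψ.injective]
  · rintro ⟨_, ⟨C, hC, rfl⟩, h, rfl⟩
    refine ⟨_, ⟨C, hC, by simpa using h, rfl⟩, ?_⟩
    rw [← hn, Finset.image_erase ψ.injective]

theorem map_symm_map (ψ : Equiv.Perm (Lit V)) (F : CNF V) :
    CNF.map ψ.symm (CNF.map ψ F) = F := by
  rw [map_map, Equiv.symm_comp_self, map_id]

theorem map_step (ψ : Equiv.Perm (Lit V)) (hn : ∀ l, ψ l.negate = (ψ l).negate)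
    {F G : CNF V} (h : UCStep F G) : UCStep (CNF.map ψ F) (CNF.map ψ G) := by
  refine ⟨fun e => h.1 ?_, ?_⟩
  · rw [← map_symm_map ψ G, e, map_symm_map]
  · rcases h.2 with ⟨l, hl, rfl⟩ | ⟨he, rfl⟩
    · exact .inl ⟨ψ l, mem_map.2 ⟨_, hl, by simp⟩, map_assign ψ hn F l⟩
    · exact .inr ⟨mem_map.2 ⟨_, he, by simp⟩, by simp [CNF.map]⟩

theorem normal_eq {F G : CNF V} (hF : ∀ F', ¬ UCStep F F')
    (h : Relation.ReflTransGen UCStep F G) : F = G := by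
  rcases Relation.ReflTransGen.cases_head h with h | ⟨c, hc, -⟩
  · exact h
  · exact absurd hc (hF c)

theorem map_normal (ψ : Equiv.Perm (Lit V)) (hn : ∀ l, ψ l.negate = (ψ l).negate)
    {F Fs : CNF V} (hF : CNF.map ψ F = F) (hs : Relation.ReflTransGen UCStep F Fs)
    (hd : ∀ F', ¬ UCStep Fs F') : CNF.map ψ Fs = Fs := by
  have hs' : Relation.ReflTransGen UCStep F (CNF.map ψ Fs) := by
    have : Relation.ReflTransGen UCStep (CNF.map ψ F) (CNF.map ψ Fs) := Relation.ReflTransGen.lift (CNF.map ψ) (fun _ _ h => map_step ψ hn h) _ _ hs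
    rwa [hF] at this
  have hn' : ∀ l, ψ.symm l.negate = (ψ.symm l).negate := fun l => by
    rw [Equiv.symm_apply_eq, hn, Equiv.apply_symm_apply]
  have hd' : ∀ F', ¬ UCStep (CNF.map ψ Fs) F' := fun F' h => by
    have := map_step ψ.symm hn' h
    rw [map_symm_map] at this
    exact hd _ this
  obtain ⟨D, a, b⟩ := Relation.church_rosser diamond hs hs'
  rw [normal_eq hd' b, normal_eq hd a]

theorem exists_perm {F : CNF V} {φ : Lit V → Lit V} (h : IsSynSym F φ) :
    ∃ ψ : Equiv.Perm (Lit V), (∀ l, ψ l.negate = (ψ l).negate) ∧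
      ∀ l ∈ CNF.lits F, ψ l = φ l := by
  obtain ⟨hb, hn, -⟩ := h
  have hm : ∀ l ∈ CNF.lits F, φ l ∈ CNF.lits F := fun l hl => hb.mapsTo hl
  have bij : Function.Bijective (extendId (CNF.lits F) φ) := by
    constructor
    · intro a b e
      unfold extendId at e
      split_ifs at e with ha hb' hb'
      · exact hb.injOn ha hb' e
      · exact absurd (e ▸ hm a ha) hb'
      · exact absurd (e ▸ hm b hb') ha
      · exact e
    · intro b
      by_cases hb' : b ∈ CNF.lits F
      · obtain ⟨a, ha, e⟩ := hb.surjOn hb'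
        have ha : a ∈ CNF.lits F := ha
        exact ⟨a, by simp [extendId, ha, e]⟩
      · exact ⟨b, by simp [extendId, hb']⟩
  refine ⟨Equiv.ofBijective _ bij, ?_, ?_⟩
  · intro l
    by_cases hl : l ∈ CNF.lits F
    · simp [extendId, hl, negate_mem_lits, hn]
    · simp [extendId, hl, negate_mem_lits]
  · intro l hl
    simp [extendId, hl]

theorem cnfMap_congr {F : CNF V} {f g : Lit V → Lit V} (h : ∀ l ∈ CNF.lits F, f l = g l) :
    CNF.map f F = CNF.map g F := by
  unfold CNF.map
  refine Finset.image_congr fun C hC => Finset.image_congr fun l hl => h l ?_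
  exact (mem_lits F l).2 ⟨C, hC, .inl hl⟩

theorem lits_subset {F Fs : CNF V} (hs : Relation.ReflTransGen UCStep F Fs) :
    CNF.lits Fs ⊆ CNF.lits F := by
  induction hs with
  | refl => exact subset_rfl
  | tail _ h ih => exact (step_lits h).trans ih

theorem mem_lits_perm (ψ : Equiv.Perm (Lit V)) (hn : ∀ l, ψ l.negate = (ψ l).negate)
    {F : CNF V} (hF : CNF.map ψ F = F) (l : Lit V) :
    ψ l ∈ CNF.lits F ↔ l ∈ CNF.lits F := by
  conv_lhs => rw [← hF]
  simp only [mem_lits, mem_map]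
  constructor
  · rintro ⟨_, ⟨C, hC, rfl⟩, h⟩
    exact ⟨C, hC, by simpa [← hn] using h⟩
  · rintro ⟨C, hC, h⟩
    exact ⟨_, ⟨C, hC, rfl⟩, by simpa [← hn] using h⟩

/-- Exhaustive application of the unit and conflict rules is
symmetry-preserving: if `F*` is obtained from `F` by exhaustively applying
unit and conflict, then every syntactic symmetry of `F` setwise stabilizes
`Lit(F*)` (so `Aut_syn(F)_{{Lit(F*)}} = Aut_syn(F)`) and its restriction to
`Lit(F*)` is a syntactic symmetry of `F*`
(so `Aut_syn(F)↓_{Lit(F*)} ⊆ Aut_syn(F*)`). -/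
theorem exhaustive_unit_conflict_symmetry_preserving (F Fs : CNF V)
    (hsteps : Relation.ReflTransGen UCStep F Fs)
    (hdone : ∀ F' : CNF V, ¬ UCStep Fs F') :
    (∀ φ : Lit V → Lit V, IsSynSym F φ →
        φ '' (CNF.lits Fs : Set (Lit V)) = (CNF.lits Fs : Set (Lit V))) ∧
    (∀ φ : Lit V → Lit V, IsSynSym F φ →
        φ '' (CNF.lits Fs : Set (Lit V)) = (CNF.lits Fs : Set (Lit V)) →
        IsSynSym Fs φ) := by
  have key : ∀ φ : Lit V → Lit V, IsSynSym F φ → CNF.map φ Fs = Fs ∧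
      φ '' (CNF.lits Fs : Set (Lit V)) = (CNF.lits Fs : Set (Lit V)) := by
    intro φ h
    obtain ⟨ψ, hn, hψ⟩ := exists_perm h
    have sub := lits_subset hsteps
    have hF : CNF.map ψ F = F := (cnfMap_congr hψ).trans h.2.2
    have hFs := map_normal ψ hn hF hsteps hdone
    refine ⟨(cnfMap_congr fun l hl => (hψ l (sub hl)).symm).trans hFs, ?_⟩
    ext x
    simp only [Set.mem_image, Finset.mem_coe]
    constructor
    · rintro ⟨l, hl, rfl⟩
      rw [← hψ l (sub hl)]
      exact (mem_lits_perm ψ hn hFs l).2 hl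
    · intro hx
      have hx' : ψ.symm x ∈ CNF.lits Fs :=
        (mem_lits_perm ψ hn hFs _).1 (by simpa using hx)
      exact ⟨ψ.symm x, hx', by rw [← hψ _ (sub hx')]; simp⟩
  refine ⟨fun φ h => (key φ h).2, fun φ h him => ⟨⟨?_, ?_, ?_⟩, ?_, (key φ h).1⟩⟩
  · exact Set.mapsTo_iff_image_subset.2 him.subset
  · exact h.1.injOn.mono (Finset.coe_subset.2 (lits_subset hsteps))
  · exact him.symm.subset
  · exact fun l hl => h.2.1 l (lits_subset hsteps hl)
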